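/- arXiv:1606.05458 — 4 statements merged into one kernel-verified Lean document; each statement's English description precedes it below -/
import Mathlib

section
/- For all 0 ≤ t < s ≤ T, the 2d×2d covariance matrix Σ_{t,s} of the linearized frozen system is symmetric positive definite (in particular invertible, with positive determinant). -/
/-!
Statement 6: the covariance matrix of the linearized frozen system is symmetric positive
definite (hence invertible with positive determinant) for all 0 ≤ t < s ≤ T.
-/

open MeasureTheory Set Matrix intervalIntegral

noncomputable section

namespace Stmt6

/-- `R_{r,s} = ∫_r^s K(v) dv`, entrywise. -/
def Rmat {d : ℕ} (K : ℝ → Matrix (Fin d) (Fin d) ℝ) (r s : ℝ) :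
    Matrix (Fin d) (Fin d) ℝ :=
  Matrix.of fun i j => ∫ v in r..s, K v i j

/-- The 2d×2d covariance matrix `Σ_{t,s}` of the linearized frozen system. -/
def Sig {d : ℕ} (abar K : ℝ → Matrix (Fin d) (Fin d) ℝ) (t s : ℝ) :
    Matrix (Fin d ⊕ Fin d) (Fin d ⊕ Fin d) ℝ :=
  Matrix.fromBlocks
    (Matrix.of fun i j => ∫ r in t..s, abar r i j)
    (Matrix.of fun i j => ∫ r in t..s, (abar r * (Rmat K r s)ᵀ) i j)
    (Matrix.of fun i j => ∫ r in t..s, (Rmat K r s * abar r) i j)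
    (Matrix.of fun i j => ∫ r in t..s, (Rmat K r s * abar r * (Rmat K r s)ᵀ) i j)

/-!
`Σ_{t,s}` is the Gramian `∫ B(r) ā(r) B(r)ᵀ dr` of the block column `B(r) = (1; R_{r,s})`, so
`z · Σ z = ∫ (B(r)ᵀ z) · ā(r) (B(r)ᵀ z) dr`. If this vanishes at `z = (x, y)`, then
`B(r)ᵀ z = x + R_{r,s}ᵀ y` vanishes for almost every `r`, hence for every `r ∈ [t, s]` by
continuity. At `r = s` this says `x = 0`, and then at `r = t` that `R_{t,s}ᵀ y = 0`. But
`R_{t,s} / (s - t)` is an average of values of `K`, so it lies in the closed convex set `E` and is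
invertible; therefore `y = 0`.
-/

section MatrixIntegral

variable {α m n : Type*} [MeasurableSpace α] {μ : Measure α}

/-- The integral of a matrix-valued function, taken entrywise as in `Rmat` and `Sig`: matrices
carry no global norm with which to form the Bochner integral. -/
def matrixIntegral (μ : Measure α) (M : α → Matrix m n ℝ) : Matrix m n ℝ :=
  Matrix.of fun i j => ∫ r, M r i j ∂μ

lemma integrable_dotProduct_mulVec [Fintype m] [Fintype n] {M : α → Matrix m n ℝ}
    (hM : ∀ i j, Integrable (fun r => M r i j) μ) (x : m → ℝ) (y : n → ℝ) :
    Integrable (fun r => x ⬝ᵥ M r *ᵥ y) μ :=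
  integrable_finsetSum _ fun i _ =>
    (integrable_finsetSum _ fun j _ => (hM i j).mul_const (y j)).const_mul (x i)

lemma dotProduct_matrixIntegral_mulVec [Fintype m] [Fintype n] {M : α → Matrix m n ℝ}
    (hM : ∀ i j, Integrable (fun r => M r i j) μ) (x : m → ℝ) (y : n → ℝ) :
    x ⬝ᵥ matrixIntegral μ M *ᵥ y = ∫ r, x ⬝ᵥ M r *ᵥ y ∂μ := by
  have hentry (i : m) (j : n) : Integrable (fun r => M r i j * y j) μ := (hM i j).mul_const (y j)
  calc x ⬝ᵥ matrixIntegral μ M *ᵥ y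
    _ = ∑ i, x i * ∑ j, ∫ r, M r i j * y j ∂μ := by
      simp only [dotProduct, mulVec, matrixIntegral, of_apply, MeasureTheory.integral_mul_const]
    _ = ∑ i, ∫ r, x i * ∑ j, M r i j * y j ∂μ :=
      Finset.sum_congr rfl fun i _ => by
        rw [MeasureTheory.integral_const_mul,
          MeasureTheory.integral_finsetSum _ fun j _ => hentry i j]
    _ = ∫ r, x ⬝ᵥ M r *ᵥ y ∂μ :=
      (MeasureTheory.integral_finsetSum _ fun i _ =>
        (integrable_finsetSum _ fun j _ => hentry i j).const_mul (x i)).symm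

lemma posDef_matrixIntegral [Fintype n] {M : α → Matrix n n ℝ}
    (hM : ∀ i j, Integrable (fun r => M r i j) μ) (hpos : ∀ᵐ r ∂μ, (M r).PosSemidef)
    (hker : ∀ z : n → ℝ, (∀ᵐ r ∂μ, z ⬝ᵥ M r *ᵥ z = 0) → z = 0) :
    (matrixIntegral μ M).PosDef := by
  refine .of_dotProduct_mulVec_pos (.ext fun i j => ?_) fun z hz => ?_
  · exact integral_congr_ae (hpos.mono fun r hr => hr.isHermitian.apply i j)
  · have hnonneg : 0 ≤ᵐ[μ] fun r => z ⬝ᵥ M r *ᵥ z :=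
      hpos.mono fun r hr => hr.dotProduct_mulVec_nonneg z
    rw [star_trivial, dotProduct_matrixIntegral_mulVec hM]
    refine (integral_nonneg_of_ae hnonneg).lt_of_ne' fun hzero => hz (hker z ?_)
    exact (integral_eq_zero_iff_of_nonneg_ae hnonneg (integrable_dotProduct_mulVec hM z z)).1 hzero

lemma of_integral_eq_matrixIntegral [Fintype m] [Fintype n] {M : α → Matrix m n ℝ}
    (hM : ∀ i j, Integrable (fun r => M r i j) μ) :
    Matrix.of (∫ r, of.symm (M r) ∂μ) = matrixIntegral μ M := by
  ext i j
  exact (congrFun (eval_integral (fun i => Integrable.of_eval (hM i)) i) j).trans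
    (eval_integral (hM i) j)

lemma inv_smul_matrixIntegral_mem_of_convex [Finite m] [Finite n] [IsFiniteMeasure μ] [NeZero μ]
    {E : Set (Matrix m n ℝ)} (hclosed : IsClosed E) (hconv : Convex ℝ E) {M : α → Matrix m n ℝ}
    (hM : ∀ i j, Integrable (fun r => M r i j) μ) (hmem : ∀ᵐ r ∂μ, M r ∈ E) :
    (μ.real univ)⁻¹ • matrixIntegral μ M ∈ E := by
  have := Fintype.ofFinite m
  have := Fintype.ofFinite n
  have hint : Integrable (fun r => of.symm (M r)) μ :=
    Integrable.of_eval fun i => Integrable.of_eval (hM i)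
  have hconv' : Convex ℝ (of ⁻¹' E) := hconv.linear_preimage (ofLinearEquiv ℝ).toLinearMap
  have hclosed' : IsClosed (of ⁻¹' E) := hclosed.preimage continuous_id
  rw [← of_integral_eq_matrixIntegral hM, smul_of, ← average_eq]
  exact hconv'.average_mem hclosed' hmem hint

end MatrixIntegral

section Gramian

lemma transpose_mulVec_eq_zero_of_posDef {m n : Type*} [Fintype m] [Fintype n]
    {a : Matrix n n ℝ} (ha : a.PosDef) {B : Matrix m n ℝ} {z : m → ℝ}
    (hz : z ⬝ᵥ (B * a * Bᵀ) *ᵥ z = 0) : Bᵀ *ᵥ z = 0 := by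
  by_contra hne
  refine (ha.dotProduct_mulVec_pos hne).ne' ?_
  rw [star_trivial, ← hz, mulVec_transpose, ← dotProduct_mulVec, ← mulVec_transpose,
    mulVec_mulVec, mulVec_mulVec, Matrix.mul_assoc]

variable {X m n : Type*} [TopologicalSpace X] [T2Space X] [MeasurableSpace X] [BorelSpace X]
  {μ : Measure X} [Fintype n] {S : Set X} {B : X → Matrix m n ℝ} {a : X → Matrix n n ℝ}

lemma integrableOn_mul_mul_transpose_apply (hS : IsCompact S) (hB : ContinuousOn B S)
    (ha : ∀ i j, IntegrableOn (fun r => a r i j) S μ) (i j : m) :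
    IntegrableOn (fun r => (B r * a r * (B r)ᵀ) i j) S μ := by
  have hBentry (i : m) (k : n) : ContinuousOn (fun r => B r i k) S :=
    (continuous_id.matrix_elem i k).comp_continuousOn hB
  simp only [mul_apply, transpose_apply]
  exact integrable_finsetSum _ fun k _ =>
    IntegrableOn.mul_continuousOn
      (integrable_finsetSum _ fun l _ => (ha l k).continuousOn_mul (hBentry i l) hS)
      (hBentry j k) hS

lemma posDef_matrixIntegral_mul_mul_transpose [Fintype m] [μ.IsOpenPosMeasure] (hS : IsCompact S)
    (hSint : S ⊆ closure (interior S)) (hB : ContinuousOn B S)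
    (ha : ∀ i j, IntegrableOn (fun r => a r i j) S μ) (hpos : ∀ᵐ r ∂μ.restrict S, (a r).PosDef)
    (hker : ∀ z : m → ℝ, (∀ r ∈ S, (B r)ᵀ *ᵥ z = 0) → z = 0) :
    (matrixIntegral (μ.restrict S) fun r => B r * a r * (B r)ᵀ).PosDef := by
  refine posDef_matrixIntegral (integrableOn_mul_mul_transpose_apply hS hB ha)
    (hpos.mono fun r hr => hr.posSemidef.mul_mul_conjTranspose_same (B r)) fun z hz => hker z ?_
  have hae : (fun r => (B r)ᵀ *ᵥ z) =ᵐ[μ.restrict S] 0 := by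
    filter_upwards [hpos, hz] with r hr hzr using transpose_mulVec_eq_zero_of_posDef hr hzr
  have hcont : ContinuousOn (fun r => (B r)ᵀ *ᵥ z) S :=
    (continuous_id.matrix_transpose.matrix_mulVec continuous_const).comp_continuousOn hB
  exact Measure.eqOn_of_ae_eq hae hcont continuousOn_const hSint

end Gramian

section EntryBounds

lemma abs_apply_le_of_posSemidef {n : Type*} [Finite n] {a : Matrix n n ℝ} (ha : a.PosSemidef)
    (i j : n) : |a i j| ≤ (a i i + a j j) / 2 := by
  classical
  have := Fintype.ofFinite n
  have hsymm : a j i = a i j := ha.isHermitian.apply i j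
  have hadd := ha.dotProduct_mulVec_nonneg (Pi.single i 1 + Pi.single j 1)
  have hsub := ha.dotProduct_mulVec_nonneg (Pi.single i 1 - Pi.single j 1)
  simp only [star_trivial, mulVec_add, mulVec_sub, mulVec_single, MulOpposite.op_one, one_smul,
    dotProduct_add, dotProduct_sub, add_dotProduct, sub_dotProduct, single_dotProduct, col_apply,
    one_mul, hsymm] at hadd hsub
  rw [abs_le]
  constructor <;> linarith

variable {n : Type*} [Fintype n]

lemma abs_apply_le_of_quadratic_le {a : Matrix n n ℝ} (ha : a.PosSemidef) {C : ℝ}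
    (h : ∀ ζ : EuclideanSpace ℝ n, ∑ i, ∑ j, a i j * ζ i * ζ j ≤ C * ‖ζ‖ ^ 2) (i j : n) :
    |a i j| ≤ C := by
  classical
  have hdiag (k : n) : a k k ≤ C := by
    simpa [Pi.single_apply] using h (EuclideanSpace.single k 1)
  linarith [abs_apply_le_of_posSemidef ha i j, hdiag i, hdiag j]

lemma posDef_of_le_quadratic {a : Matrix n n ℝ} (ha : a.IsSymm) {c : ℝ} (hc : 0 < c)
    (h : ∀ ζ : EuclideanSpace ℝ n, c * ‖ζ‖ ^ 2 ≤ ∑ i, ∑ j, a i j * ζ i * ζ j) : a.PosDef := by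
  refine .of_dotProduct_mulVec_pos (isHermitian_iff_isSymm.2 ha) fun z hz => ?_
  have hz' : 0 < c * ‖WithLp.toLp 2 z‖ ^ 2 := by
    have : WithLp.toLp 2 z ≠ 0 := by simpa using hz
    positivity
  calc 0 < ∑ i, ∑ j, a i j * z i * z j := hz'.trans_le (h (WithLp.toLp 2 z))
    _ = star z ⬝ᵥ a *ᵥ z := by
      simp only [star_trivial, dotProduct, mulVec, Finset.mul_sum]
      exact Finset.sum_congr rfl fun i _ => Finset.sum_congr rfl fun j _ => by ring

lemma abs_apply_le_sqrt_of_mulVec_sq_le {m : Type*} [Fintype m] {A : Matrix m n ℝ} {C : ℝ}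
    (h : ∀ ζ : EuclideanSpace ℝ n, ∑ i, (A *ᵥ ζ.ofLp) i ^ 2 ≤ C * ‖ζ‖ ^ 2) (i : m) (j : n) :
    |A i j| ≤ √C := by
  classical
  have hcol : ∑ k, A k j ^ 2 ≤ C := by
    simpa using h (EuclideanSpace.single j 1)
  exact Real.abs_le_sqrt ((Finset.single_le_sum (fun k _ => sq_nonneg (A k j))
    (Finset.mem_univ i)).trans hcol)

end EntryBounds

lemma intervalIntegrable_of_norm_le {F : Type*} [NormedAddCommGroup F] {μ : Measure ℝ}
    [IsLocallyFiniteMeasure μ] {f : ℝ → F} (hf : AEStronglyMeasurable f μ) {C t s : ℝ}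
    (hts : t ≤ s) (hb : ∀ r ∈ Icc t s, ‖f r‖ ≤ C) : IntervalIntegrable f μ t s :=
  (intervalIntegrable_const (c := C)).mono_fun' hf.restrict <|
    ae_restrict_of_forall_mem measurableSet_uIoc fun r hr =>
      hb r (uIcc_of_le hts ▸ uIoc_subset_uIcc hr)

section LinearizedSystem

variable {d : ℕ} {abar K : ℝ → Matrix (Fin d) (Fin d) ℝ} {t s : ℝ}

lemma Rmat_self : Rmat K s s = 0 := by
  ext i j
  simp [Rmat]

lemma continuousOn_Rmat_left (hts : t ≤ s)
    (hK : ∀ i j, IntervalIntegrable (fun r => K r i j) volume t s) :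
    ContinuousOn (fun r => Rmat K r s) (Icc t s) := by
  refine continuousOn_pi.2 fun i => continuousOn_pi.2 fun j => ?_
  rw [← uIcc_of_le hts]
  exact continuousOn_primitive_interval_left <| by
    rw [uIcc_of_le hts]
    exact (intervalIntegrable_iff_integrableOn_Icc_of_le hts).1 (hK i j)

lemma Rmat_eq_matrixIntegral (hts : t ≤ s) :
    Rmat K t s = matrixIntegral (volume.restrict (Icc t s)) K := by
  simp only [Rmat, matrixIntegral, integral_Icc_eq_integral_Ioc, integral_of_le hts]

lemma isUnit_Rmat_of_convex (hts : t < s) {E : Set (Matrix (Fin d) (Fin d) ℝ)}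
    (hclosed : IsClosed E) (hconv : Convex ℝ E) (hinv : ∀ A ∈ E, IsUnit A)
    (hK : ∀ i j, IntervalIntegrable (fun r => K r i j) volume t s)
    (hmem : ∀ᵐ r ∂volume.restrict (Icc t s), K r ∈ E) : IsUnit (Rmat K t s) := by
  have : NeZero (volume.restrict (Icc t s)) := ⟨by simp [hts]⟩
  have havg := inv_smul_matrixIntegral_mem_of_convex hclosed hconv
    (fun i j => (intervalIntegrable_iff_integrableOn_Icc_of_le hts.le).1 (hK i j)) hmem
  rw [← Rmat_eq_matrixIntegral hts.le, measureReal_restrict_apply_univ,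
    Real.volume_real_Icc_of_le hts.le] at havg
  exact (isUnit_smul_iff (Units.mk0 (s - t)⁻¹ (inv_ne_zero (sub_pos.2 hts).ne')) _).1
    (hinv _ havg)

/-- The block column `B(r) = (1; R_{r,s})`: the response at time `s` of the two components of the
linearized system to a noise increment at time `r`. -/
def noiseResponse (K : ℝ → Matrix (Fin d) (Fin d) ℝ) (r s : ℝ) :
    Matrix (Fin d ⊕ Fin d) (Fin d) ℝ :=
  Matrix.fromRows 1 (Rmat K r s)

lemma noiseResponse_transpose_mulVec (r s : ℝ) (x y : Fin d → ℝ) :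
    (noiseResponse K r s)ᵀ *ᵥ Sum.elim x y = x + (Rmat K r s)ᵀ *ᵥ y := by
  simp [noiseResponse, transpose_fromRows, fromCols_mulVec]

lemma noiseResponse_mul_mul_transpose (a : Matrix (Fin d) (Fin d) ℝ) (r s : ℝ) :
    noiseResponse K r s * a * (noiseResponse K r s)ᵀ =
      Matrix.fromBlocks a (a * (Rmat K r s)ᵀ) (Rmat K r s * a)
        (Rmat K r s * a * (Rmat K r s)ᵀ) := by
  simp [noiseResponse, transpose_fromRows, fromRows_mul]

lemma Sig_eq_matrixIntegral (hts : t ≤ s) :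
    Sig abar K t s = matrixIntegral (volume.restrict (Icc t s)) fun r =>
      noiseResponse K r s * abar r * (noiseResponse K r s)ᵀ := by
  simp only [noiseResponse_mul_mul_transpose, matrixIntegral, integral_Icc_eq_integral_Ioc,
    ← integral_of_le hts]
  ext (i | i) (j | j) <;> rfl

lemma continuousOn_noiseResponse (hts : t ≤ s)
    (hK : ∀ i j, IntervalIntegrable (fun r => K r i j) volume t s) :
    ContinuousOn (fun r => noiseResponse K r s) (Icc t s) := by
  have hR := continuousOn_Rmat_left hts hK
  refine continuousOn_pi.2 fun i => ?_
  rcases i with i | i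
  · exact continuousOn_const
  · exact (continuous_apply i).comp_continuousOn hR

lemma eq_zero_of_noiseResponse_transpose_mulVec_eq_zero (hts : t ≤ s) (hR : IsUnit (Rmat K t s))
    {z : Fin d ⊕ Fin d → ℝ} (hz : ∀ r ∈ Icc t s, (noiseResponse K r s)ᵀ *ᵥ z = 0) : z = 0 := by
  obtain ⟨x, y, rfl⟩ : ∃ x y, z = Sum.elim x y := ⟨_, _, (Sum.elim_comp_inl_inr z).symm⟩
  simp only [noiseResponse_transpose_mulVec] at hz
  have hx : x = 0 := by simpa [Rmat_self] using hz s (right_mem_Icc.2 hts)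
  have hRy : (Rmat K t s)ᵀ *ᵥ y = 0 := by simpa [hx] using hz t (left_mem_Icc.2 hts)
  have hy : y = 0 := mulVec_injective_of_isUnit ((isUnit_transpose _).2 hR) (by simpa using hRy)
  rw [hx, hy, Sum.elim_zero_zero]

theorem covariance_posDef_general (hts : t < s)
    (habar : ∀ i j, IntervalIntegrable (fun r => abar r i j) volume t s)
    (hpos : ∀ᵐ r ∂volume.restrict (Icc t s), (abar r).PosDef)
    (hK : ∀ i j, IntervalIntegrable (fun r => K r i j) volume t s)
    (hR : IsUnit (Rmat K t s)) :
    (Sig abar K t s).IsSymm ∧ (Sig abar K t s).PosDef ∧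
      IsUnit (Sig abar K t s) ∧ 0 < (Sig abar K t s).det := by
  have hSig : (Sig abar K t s).PosDef := by
    rw [Sig_eq_matrixIntegral hts.le]
    exact posDef_matrixIntegral_mul_mul_transpose isCompact_Icc
      (closure_interior_Icc hts.ne).superset (continuousOn_noiseResponse hts.le hK)
      (fun i j => (intervalIntegrable_iff_integrableOn_Icc_of_le hts.le).1 (habar i j)) hpos
      fun _ => eq_zero_of_noiseResponse_transpose_mulVec_eq_zero hts.le hR
  exact ⟨isHermitian_iff_isSymm.1 hSig.isHermitian, hSig, hSig.isUnit, hSig.det_pos⟩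

end LinearizedSystem

theorem covariance_posDef
    (d : ℕ) (hd : 0 < d) (T : ℝ) (hT : 0 < T)
    (Λ Λ' : ℝ) (hΛ : 1 < Λ) (hΛ' : 1 < Λ')
    -- E : closed convex set of invertible matrices, uniformly non-degenerate
    (Ecal : Set (Matrix (Fin d) (Fin d) ℝ))
    (hEclosed : IsClosed Ecal) (hEconv : Convex ℝ Ecal)
    (hEinv : ∀ A ∈ Ecal, IsUnit A)
    (hEnd : ∀ A ∈ Ecal, ∀ ζ : EuclideanSpace ℝ (Fin d),
      Λ'⁻¹ * ‖ζ‖ ^ 2 ≤ ∑ i, ((Aᵀ *ᵥ (WithLp.equiv 2 _ ζ)) i) ^ 2 ∧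
      ∑ i, ((Aᵀ *ᵥ (WithLp.equiv 2 _ ζ)) i) ^ 2 ≤ Λ' * ‖ζ‖ ^ 2)
    -- ā : measurable, symmetric, uniformly elliptic
    (abar : ℝ → Matrix (Fin d) (Fin d) ℝ) (habar : ∀ i j, Measurable fun r => abar r i j)
    (hsymm : ∀ r ∈ Icc (0:ℝ) T, (abar r).IsSymm)
    (hell : ∀ r ∈ Icc (0:ℝ) T, ∀ ζ : EuclideanSpace ℝ (Fin d),
      Λ⁻¹ * ‖ζ‖ ^ 2 ≤ ∑ i, ∑ j, abar r i j * ζ i * ζ j ∧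
      ∑ i, ∑ j, abar r i j * ζ i * ζ j ≤ Λ * ‖ζ‖ ^ 2)
    -- K : measurable with values in E
    (K : ℝ → Matrix (Fin d) (Fin d) ℝ) (hK : ∀ i j, Measurable fun r => K r i j)
    (hKmem : ∀ r ∈ Icc (0:ℝ) T, K r ∈ Ecal) :
    ∀ t s : ℝ, 0 ≤ t → t < s → s ≤ T →
      (Sig abar K t s).IsSymm ∧ (Sig abar K t s).PosDef ∧
      IsUnit (Sig abar K t s) ∧ 0 < (Sig abar K t s).det := by
  intro t s ht hts hs
  have hsub : Icc t s ⊆ Icc 0 T := Icc_subset_Icc ht hs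
  have hpos : ∀ r ∈ Icc t s, (abar r).PosDef := fun r hr =>
    posDef_of_le_quadratic (hsymm r (hsub hr)) (by positivity) fun ζ => (hell r (hsub hr) ζ).1
  have habarInt (i j) : IntervalIntegrable (fun r => abar r i j) volume t s :=
    intervalIntegrable_of_norm_le (habar i j).aestronglyMeasurable hts.le fun r hr =>
      abs_apply_le_of_quadratic_le (hpos r hr).posSemidef (fun ζ => (hell r (hsub hr) ζ).2) i j
  have hKInt (i j) : IntervalIntegrable (fun r => K r i j) volume t s :=
    intervalIntegrable_of_norm_le (hK i j).aestronglyMeasurable hts.le fun r hr =>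
      abs_apply_le_sqrt_of_mulVec_sq_le (fun ζ => (hEnd _ (hKmem r (hsub hr)) ζ).2) j i
  exact covariance_posDef_general hts habarInt
    (ae_restrict_of_forall_mem measurableSet_Icc hpos) hKInt
    (isUnit_Rmat_of_convex hts hEclosed hEconv hEinv hKInt
      (ae_restrict_of_forall_mem measurableSet_Icc fun r hr => hKmem r (hsub hr)))

end Stmt6
end
end

section
/- Let γ > 0 and α ∈ (0,1) with α < 1 − 1/γ, let β ∈ (0,1), and let (Ω, 𝓕, ℙ) be a probability space carrying a real-valued process (𝒲_t)_{t≥0} with continuous paths such that almost surely 𝒲_t = t^γ 𝒲_1 for all t ≥ 0, and such that E|𝒲_1| < +∞. Let x > 0 and let X be a real-valued process with continuous paths satisfying almost surely X_t = x + ∫_0^t sign(X_s)|X_s|^α ds + 𝒲_t for all t ≥ 0. Then there exists ρ > 0, depending only on α, β, γ and E|𝒲_1| (in particular not on x), such that ℙ( τ(X) ≥ ρ ) ≥ 3/4. -/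
/-!
Statement 14 (Lemma 4.1 of the paper): with probability at least 3/4 the solution of the
perturbed Peano equation stays above the curve `(1−β) c_α t^{1/(1−α)}` up to a time `ρ`
depending only on `α`, `β`, `γ` and (a bound `M` on) `E|𝒲_1|` — in particular not on the
initial condition `x` nor on the solution `X`.
-/

open MeasureTheory Set intervalIntegral

noncomputable section

namespace Stmt14

/-!
Write `p = 1 / (1 - α)`. The Peano curve `φ t = c_α t ^ p` solves `y' = y ^ α`, so the drift
collected by a path lying above `b φ` on `[0, t]`, with `0 < b < 1`, is at least `b ^ α φ t`. At the
first time `t` the solution meets `b φ`, the noise must therefore be at most `-(b ^ α - b) φ t`, a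
negative multiple of `t ^ p`. When the noise is at least `-K t ^ γ` and `p < γ`, this is impossible
for small `t`, and Markov's inequality provides such a `K` with the required probability.
-/

theorem exists_first_crossing {S T : Type*} [ConditionallyCompleteLinearOrder S]
    [TopologicalSpace S] [OrderTopology S] [DenselyOrdered S] [LinearOrder T] [TopologicalSpace T]
    [OrderClosedTopology T] {f g : S → T} {a b : S} (hf : ContinuousOn f (Icc a b))
    (hg : ContinuousOn g (Icc a b)) (hab : a ≤ b) (ha : g a < f a) (hb : f b ≤ g b) :
    ∃ c ∈ Ioc a b, f c = g c ∧ ∀ s ∈ Icc a c, g s ≤ f s := by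
  have hcompact : IsCompact {s ∈ Icc a b | f s ≤ g s} :=
    isCompact_Icc.of_isClosed_subset (isClosed_Icc.isClosed_le hf hg) (sep_subset _ _)
  obtain ⟨c, ⟨hc, hfg⟩, hmin⟩ := hcompact.exists_isLeast ⟨b, right_mem_Icc.2 hab, hb⟩
  have hac : a < c := hc.1.lt_of_ne fun h => (h ▸ hfg).not_gt ha
  have hbefore : ∀ s ∈ Ico a c, g s ≤ f s := fun s hs =>
    (not_le.1 fun h => (hmin ⟨⟨hs.1, hs.2.le.trans hc.2⟩, h⟩).not_gt hs.2).le
  have hsub : Icc a c ⊆ Icc a b := Icc_subset_Icc_right hc.2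
  have habove : ∀ s ∈ Icc a c, g s ≤ f s := by
    rw [← closure_Ico hac.ne] at hsub ⊢
    exact fun s hs => le_on_closure hbefore (hg.mono hsub) (hf.mono hsub) hs
  exact ⟨c, ⟨hac, hc.2⟩, hfg.antisymm (habove c (right_mem_Icc.2 hac.le)), habove⟩

theorem div_rpow_inv_sub_le_of_mul_rpow_le_mul_rpow {A K p q t : ℝ} (hA : 0 ≤ A) (hK : 0 < K)
    (hpq : p < q) (ht : 0 < t) (h : A * t ^ p ≤ K * t ^ q) : (A / K) ^ (q - p)⁻¹ ≤ t := by
  rw [Real.rpow_inv_le_iff_of_pos (by positivity) ht.le (sub_pos.2 hpq), Real.rpow_sub ht,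
    div_le_div_iff₀ hK (by positivity), mul_comm (t ^ q)]
  exact h

theorem ofReal_one_sub_integral_div_le_measure_lt {Ω : Type*} [MeasurableSpace Ω] {μ : Measure Ω}
    [IsProbabilityMeasure μ] {Z : Ω → ℝ} (hZ : 0 ≤ᵐ[μ] Z) (hZi : Integrable Z μ) {K : ℝ}
    (hK : 0 < K) : ENNReal.ofReal (1 - (∫ ω, Z ω ∂μ) / K) ≤ μ {ω | Z ω < K} := by
  have hmarkov : μ.real {ω | K ≤ Z ω} ≤ (∫ ω, Z ω ∂μ) / K :=
    (le_div_iff₀' hK).2 (mul_meas_ge_le_integral_of_nonneg hZ hZi K)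
  have hcompl : μ.real {ω | Z ω < K} = 1 - μ.real {ω | K ≤ Z ω} := by
    rw [← probReal_compl_eq_one_sub₀
      (nullMeasurableSet_le aemeasurable_const hZi.aemeasurable)]
    simp only [compl_ofPred, not_le]
  refine ENNReal.ofReal_le_of_le_toReal ?_
  change _ ≤ μ.real _
  linarith

/-- The Peano curve `c_α t ^ (1 / (1 - α))`: the maximal solution of `y' = y ^ α`, `y 0 = 0`, on
`t ≥ 0`. -/
def peanoCurve (α t : ℝ) : ℝ :=
  (1 - α) ^ (1 / (1 - α)) * t ^ (1 / (1 - α))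

section PeanoCurve

variable {α : ℝ} (hα : α < 1)
include hα

theorem peanoCurve_zero : peanoCurve α 0 = 0 := by
  simp [peanoCurve, (sub_pos.2 hα).ne']

theorem peanoCurve_nonneg {t : ℝ} (ht : 0 ≤ t) : 0 ≤ peanoCurve α t := by
  have := sub_pos.2 hα
  unfold peanoCurve
  positivity

theorem peanoCurve_pos {t : ℝ} (ht : 0 < t) : 0 < peanoCurve α t := by
  have := sub_pos.2 hα
  unfold peanoCurve
  positivity

theorem continuous_peanoCurve : Continuous (peanoCurve α) :=
  continuous_const.mul (Real.continuous_rpow_const (one_div_nonneg.2 (sub_pos.2 hα).le))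

theorem peanoCurve_rpow {t : ℝ} (ht : 0 ≤ t) :
    peanoCurve α t ^ α = (1 - α) ^ (α / (1 - α)) * t ^ (α / (1 - α)) := by
  have := sub_pos.2 hα
  rw [peanoCurve, Real.mul_rpow (by positivity) (by positivity), ← Real.rpow_mul this.le,
    ← Real.rpow_mul ht, one_div_mul_eq_div]

theorem integral_peanoCurve_rpow {t : ℝ} (ht : 0 ≤ t) :
    ∫ s in (0 : ℝ)..t, peanoCurve α s ^ α = peanoCurve α t := by
  have h1α : 0 < 1 - α := sub_pos.2 hα
  have hexp : α / (1 - α) + 1 = 1 / (1 - α) := by field_simp; ring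
  have hexp_pos : 0 < 1 / (1 - α) := one_div_pos.2 h1α
  calc ∫ s in (0 : ℝ)..t, peanoCurve α s ^ α
      = ∫ s in (0 : ℝ)..t, (1 - α) ^ (α / (1 - α)) * s ^ (α / (1 - α)) :=
        integral_congr_Ioo_of_le ht fun s hs => peanoCurve_rpow hα hs.1.le
    _ = (1 - α) ^ (α / (1 - α)) * (t ^ (1 / (1 - α)) / (1 / (1 - α))) := by
        rw [intervalIntegral.integral_const_mul, integral_rpow (Or.inl (by linarith)), hexp,
          Real.zero_rpow hexp_pos.ne', sub_zero]
    _ = (1 - α) ^ (α / (1 - α) + 1) * t ^ (1 / (1 - α)) := by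
        rw [Real.rpow_add_one h1α.ne', div_div_eq_mul_div, div_one]
        ring
    _ = peanoCurve α t := by rw [hexp, peanoCurve]

end PeanoCurve

/-- `Y` solves the Peano equation `y' = sign y |y| ^ α` on `t ≥ 0`, in integral form, started from
`x` and perturbed by the path `w`. -/
def IsPerturbedPeanoSolution (α x : ℝ) (w Y : ℝ → ℝ) : Prop :=
  ∀ t : ℝ, 0 ≤ t → Y t = x + (∫ s in (0 : ℝ)..t, Real.sign (Y s) * |Y s| ^ α) + w t

/-- A time before which a solution perturbed by `w t ≥ -K t ^ γ`, where `γ > 1 / (1 - α)`, cannot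
reach `b` times the Peano curve, `0 < b < 1`. It is the positive root `t` of
`(b ^ α - b) c_α t ^ (1 / (1 - α)) = K t ^ γ`. -/
def peanoEscapeTime (α γ b K : ℝ) : ℝ :=
  ((b ^ α - b) * (1 - α) ^ (1 / (1 - α)) / K) ^ (γ - 1 / (1 - α))⁻¹

theorem peanoEscapeTime_pos {α γ b K : ℝ} (hα : α < 1) (hb : b ∈ Ioo (0 : ℝ) 1) (hK : 0 < K) :
    0 < peanoEscapeTime α γ b K := by
  have := sub_pos.2 hα
  have hgap : 0 < b ^ α - b := sub_pos.2 (Real.self_lt_rpow_of_lt_one hb.1 hb.2 hα)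
  unfold peanoEscapeTime
  positivity

theorem rpow_mul_peanoCurve_le_integral {α b t : ℝ} {Y : ℝ → ℝ} (hα : α ∈ Ico (0 : ℝ) 1)
    (hb : 0 < b) (ht : 0 ≤ t) (hYc : ContinuousOn Y (Icc 0 t))
    (hY : ∀ s ∈ Icc 0 t, b * peanoCurve α s ≤ Y s) :
    b ^ α * peanoCurve α t ≤ ∫ s in (0 : ℝ)..t, Real.sign (Y s) * |Y s| ^ α := by
  have hdrift : EqOn (fun s => Y s ^ α) (fun s => Real.sign (Y s) * |Y s| ^ α) (Ioo 0 t) := by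
    intro s hs
    have hYs : 0 < Y s :=
      (mul_pos hb (peanoCurve_pos hα.2 hs.1)).trans_le (hY s (Ioo_subset_Icc_self hs))
    simp only [Real.sign_of_pos hYs, abs_of_pos hYs, one_mul]
  calc b ^ α * peanoCurve α t
      = ∫ s in (0 : ℝ)..t, b ^ α * peanoCurve α s ^ α := by
        rw [intervalIntegral.integral_const_mul, integral_peanoCurve_rpow hα.2 ht]
    _ ≤ ∫ s in (0 : ℝ)..t, Y s ^ α := by
        refine integral_mono_on ht ?_ ?_ fun s hs => ?_
        · exact (continuous_const.mul ((continuous_peanoCurve hα.2).rpow_const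
            fun _ => Or.inr hα.1)).intervalIntegrable _ _
        · exact (hYc.rpow_const fun _ _ => Or.inr hα.1).intervalIntegrable_of_Icc ht
        · have hcurve : 0 ≤ peanoCurve α s := peanoCurve_nonneg hα.2 hs.1
          rw [← Real.mul_rpow hb.le hcurve]
          exact Real.rpow_le_rpow (by positivity) (hY s hs) hα.1
    _ = ∫ s in (0 : ℝ)..t, Real.sign (Y s) * |Y s| ^ α := integral_congr_Ioo_of_le ht hdrift

theorem IsPerturbedPeanoSolution.peanoEscapeTime_le {α γ b K x t : ℝ} {w Y : ℝ → ℝ}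
    (hY : IsPerturbedPeanoSolution α x w Y) (hYc : Continuous Y) (hα : α ∈ Ico (0 : ℝ) 1)
    (hγ : 1 / (1 - α) < γ) (hb : b ∈ Ioo (0 : ℝ) 1) (hK : 0 < K) (hx : 0 < x)
    (hw : ∀ s, 0 ≤ s → -(K * s ^ γ) ≤ w s) (ht : 0 ≤ t) (hYt : Y t ≤ b * peanoCurve α t) :
    peanoEscapeTime α γ b K ≤ t := by
  have h1α : 0 < 1 - α := sub_pos.2 hα.2
  have hγ0 : 0 < γ := (one_div_pos.2 h1α).trans hγ
  have hstart : b * peanoCurve α 0 < Y 0 := by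
    have hw0 := hw 0 le_rfl
    rw [Real.zero_rpow hγ0.ne'] at hw0
    rw [peanoCurve_zero hα.2, hY 0 le_rfl, integral_same]
    linarith
  obtain ⟨τ, hτ, hcontact, habove⟩ := exists_first_crossing (g := fun s => b * peanoCurve α s)
    hYc.continuousOn ((continuous_peanoCurve hα.2).const_mul b).continuousOn ht hstart hYt
  have hdrift : b ^ α * peanoCurve α τ ≤ ∫ s in (0 : ℝ)..τ, Real.sign (Y s) * |Y s| ^ α :=
    rpow_mul_peanoCurve_le_integral hα hb.1 hτ.1.le hYc.continuousOn habove
  have hgap : (b ^ α - b) * peanoCurve α τ ≤ K * τ ^ γ := by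
    linarith [hY τ hτ.1.le, hw τ hτ.1.le]
  have hcoeff : 0 ≤ (b ^ α - b) * (1 - α) ^ (1 / (1 - α)) :=
    mul_nonneg (sub_pos.2 (Real.self_lt_rpow_of_lt_one hb.1 hb.2 hα.2)).le (by positivity)
  rw [peanoCurve, ← mul_assoc] at hgap
  exact (div_rpow_inv_sub_le_of_mul_rpow_le_mul_rpow hcoeff hK hγ hτ.1 hgap).trans hτ.2

theorem escape_probability_general {γ α β ε : ℝ} (M : ℝ) (hα : α ∈ Ico (0 : ℝ) 1)
    (hγ : 1 / (1 - α) < γ) (hβ : β ∈ Ioo (0 : ℝ) 1) (hε : 0 < ε) :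
    ∃ ρ > (0 : ℝ), ∀ (Ω : Type*) [MeasurableSpace Ω] (ℙ : Measure Ω) [IsProbabilityMeasure ℙ]
      (W : ℝ → Ω → ℝ) (Z : Ω → ℝ), 0 ≤ᵐ[ℙ] Z → Integrable Z ℙ → ∫ ω, Z ω ∂ℙ ≤ M →
      (∀ᵐ ω ∂ℙ, ∀ t : ℝ, 0 ≤ t → -(t ^ γ * Z ω) ≤ W t ω) →
      ∀ x : ℝ, 0 < x → ∀ X : ℝ → Ω → ℝ, (∀ᵐ ω ∂ℙ, Continuous fun t => X t ω) →
      (∀ᵐ ω ∂ℙ, IsPerturbedPeanoSolution α x (fun t => W t ω) fun t => X t ω) →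
      ENNReal.ofReal (1 - ε) ≤
        ℙ {ω | ∀ t : ℝ, 0 < t → X t ω ≤ (1 - β) * peanoCurve α t → ρ ≤ t} := by
  have hb : 1 - β ∈ Ioo (0 : ℝ) 1 := ⟨sub_pos.2 hβ.2, sub_lt_self 1 hβ.1⟩
  set K : ℝ := (|M| + 1) / ε with hK_def
  have hK : 0 < K := by positivity
  refine ⟨peanoEscapeTime α γ (1 - β) K, peanoEscapeTime_pos hα.2 hb hK, ?_⟩
  intro Ω _ ℙ _ W Z hZ hZi hZM hW x hx X hXc hX
  have hmean : (∫ ω, Z ω ∂ℙ) / K ≤ ε := by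
    rw [div_le_iff₀ hK, hK_def, mul_div_cancel₀ _ hε.ne']
    linarith [le_abs_self M]
  calc ENNReal.ofReal (1 - ε)
      ≤ ENNReal.ofReal (1 - (∫ ω, Z ω ∂ℙ) / K) := by gcongr
    _ ≤ ℙ {ω | Z ω < K} := ofReal_one_sub_integral_div_le_measure_lt hZ hZi hK
    _ ≤ _ := measure_mono_ae ?_
  filter_upwards [hW, hXc, hX] with ω hWω hXcω hXω hZω t ht hXt
  refine hXω.peanoEscapeTime_le hXcω hα hγ hb hK hx (fun s hs => ?_) ht.le hXt
  refine le_trans (neg_le_neg ?_) (hWω s hs)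
  rw [mul_comm K]
  exact mul_le_mul_of_nonneg_left (le_of_lt hZω) (Real.rpow_nonneg hs γ)

theorem escape_probability
    (γ α β M : ℝ) (hγ : 0 < γ) (hα : α ∈ Ioo (0:ℝ) 1) (hαγ : α < 1 - 1 / γ)
    (hβ : β ∈ Ioo (0:ℝ) 1) :
    ∃ ρ > (0:ℝ),
      ∀ (Ω : Type) [MeasurableSpace Ω], ∀ ℙ : Measure Ω, IsProbabilityMeasure ℙ →
      ∀ W : ℝ → Ω → ℝ,
        -- 𝒲 has continuous paths, is γ-self-similar, and 𝒲_1 is integrable with E|𝒲_1| ≤ M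
        (∀ ω, Continuous fun t => W t ω) →
        (∀ᵐ ω ∂ℙ, ∀ t : ℝ, 0 ≤ t → W t ω = t ^ γ * W 1 ω) →
        Integrable (W 1) ℙ →
        (∫ ω, |W 1 ω| ∂ℙ) ≤ M →
        -- X is a solution of the perturbed Peano equation started from x > 0
        ∀ x : ℝ, 0 < x → ∀ X : ℝ → Ω → ℝ,
          (∀ ω, Continuous fun t => X t ω) →
          (∀ᵐ ω ∂ℙ, ∀ t : ℝ, 0 ≤ t →
            X t ω = x + (∫ s in (0:ℝ)..t, Real.sign (X s ω) * |X s ω| ^ α) + W t ω) →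
          -- conclusion : ℙ(τ(X) ≥ ρ) ≥ 3/4, where
          -- τ(X) = inf{t > 0 : X_t ≤ (1−β) c_α t^{1/(1−α)}}
          (3 : ENNReal) / 4 ≤
            ℙ {ω | ∀ t : ℝ, 0 < t →
              X t ω ≤ (1 - β) * (1 - α) ^ ((1:ℝ) / (1 - α)) * t ^ ((1:ℝ) / (1 - α)) →
                ρ ≤ t} := by
  have hγ' : 1 / (1 - α) < γ := (one_div_lt (sub_pos.2 hα.2) hγ).2 (by linarith)
  obtain ⟨ρ, hρ, hescape⟩ :=
    escape_probability_general (ε := 1 / 4) M (Ioo_subset_Ico_self hα) hγ' hβ (by norm_num)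
  refine ⟨ρ, hρ, fun Ω _ ℙ _ W _ hWs hWi hWM x hx X hXc hX => ?_⟩
  have hnoise : ∀ᵐ ω ∂ℙ, ∀ t : ℝ, 0 ≤ t → -(t ^ γ * |W 1 ω|) ≤ W t ω := by
    filter_upwards [hWs] with ω hω t ht
    rw [hω t ht, ← mul_neg]
    exact mul_le_mul_of_nonneg_left (neg_abs_le _) (Real.rpow_nonneg ht γ)
  have hprob : (3 : ENNReal) / 4 = ENNReal.ofReal (1 - 1 / 4) := by
    norm_num [ENNReal.ofReal_div_of_pos]
  simpa only [hprob, peanoCurve, ← mul_assoc] using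
    hescape Ω ℙ W (fun ω => |W 1 ω|) (.of_forall fun ω => abs_nonneg _) hWi.abs hWM hnoise x hx X
      (.of_forall hXc) hX

end Stmt14
end
end

section
/- Let α ∈ (0,1), β ∈ (0,1), c_α := (1−α)^{1/(1−α)}, x > 0, S > 0, and let w : [0, S] → ℝ be continuous with w(0) = 0. Suppose X : [0, S] → ℝ is continuous and satisfies X_t = x + ∫_0^t sign(X_s)|X_s|^α ds + w_t for all t ∈ [0, S], and suppose in addition that X_t ≥ (1−β) c_α t^{1/(1−α)} for all t ∈ [0, S]. Then X_t ≥ (1−β)^α c_α t^{1/(1−α)} + w_t for all t ∈ [0, S]. (Key computation: ∫_0^t ((1−β) c_α s^{1/(1−α)})^α ds = (1−β)^α c_α t^{1/(1−α)}.) -/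
/-!
Statement 15: key deterministic lower bound in the proof of Lemma 4.1: on the event where
`X` stays above `(1−β) c_α t^{1/(1−α)}`, one has `X_t ≥ (1−β)^α c_α t^{1/(1−α)} + w_t`.
-/

open Set intervalIntegral

noncomputable section

namespace Stmt15

/-!
For `0 < α < 1` the equation `y' = y ^ α`, `y 0 = 0`, has the maximal solution
`y t = ((1 - α) t) ^ (1 / (1 - α))`, and the hypothesis on `X` reads `(1 - β) y ≤ X`. As `X ≥ 0`,
the drift is `X ^ α ≥ (1 - β) ^ α y ^ α = (1 - β) ^ α y'`, and integrating from `0` to `t` turns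
the right-hand side into `(1 - β) ^ α y t`.
-/

lemma sign_mul_abs_rpow {α : ℝ} (hα : α ≠ 0) (y : ℝ) :
    Real.sign y * |y| ^ α = y⁺ ^ α - y⁻ ^ α := by
  rcases lt_trichotomy y 0 with hy | rfl | hy
  · rw [Real.sign_of_neg hy, abs_of_neg hy, posPart_of_nonpos hy.le, negPart_of_nonpos hy.le,
      Real.zero_rpow hα, neg_one_mul, zero_sub]
  · simp
  · rw [Real.sign_of_pos hy, abs_of_pos hy, posPart_of_nonneg hy.le, negPart_of_nonneg hy.le,
      Real.zero_rpow hα, one_mul, sub_zero]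

lemma sign_mul_abs_rpow_of_nonneg {α y : ℝ} (hα : α ≠ 0) (hy : 0 ≤ y) :
    Real.sign y * |y| ^ α = y ^ α := by
  rw [sign_mul_abs_rpow hα, posPart_of_nonneg hy, negPart_of_nonneg hy, Real.zero_rpow hα,
    sub_zero]

lemma continuous_sign_mul_abs_rpow {α : ℝ} (hα : 0 < α) :
    Continuous fun y : ℝ ↦ Real.sign y * |y| ^ α := by
  simp only [sign_mul_abs_rpow hα.ne']
  exact (continuous_posPart.rpow_const fun _ ↦ Or.inr hα.le).sub
    (continuous_negPart.rpow_const fun _ ↦ Or.inr hα.le)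

/-- The maximal solution `y` of `y' = y ^ α`, `y 0 = 0`, on `[0, ∞)`, for `0 < α < 1`; it is
`c_α t ^ (1 / (1 - α))`, with the constant `c_α` absorbed into the base of the power. -/
def maximalSolution (α t : ℝ) : ℝ :=
  ((1 - α) * t) ^ (1 / (1 - α))

section MaximalSolution

variable {α t : ℝ}

lemma maximalSolution_eq (hα : α ≤ 1) (ht : 0 ≤ t) :
    maximalSolution α t = (1 - α) ^ (1 / (1 - α)) * t ^ (1 / (1 - α)) :=
  Real.mul_rpow (sub_nonneg.2 hα) ht

lemma maximalSolution_zero (hα : α ≠ 1) : maximalSolution α 0 = 0 := by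
  rw [maximalSolution, mul_zero, Real.zero_rpow (one_div_ne_zero (sub_ne_zero.2 hα.symm))]

lemma maximalSolution_nonneg (hα : α ≤ 1) (ht : 0 ≤ t) : 0 ≤ maximalSolution α t :=
  Real.rpow_nonneg (mul_nonneg (sub_nonneg.2 hα) ht) _

lemma continuous_maximalSolution (hα : α ≤ 1) : Continuous (maximalSolution α) :=
  (continuous_const_mul (1 - α)).rpow_const fun _ ↦
    Or.inr (one_div_nonneg.2 (sub_nonneg.2 hα))

lemma maximalSolution_rpow (hα : α < 1) (ht : 0 ≤ t) :
    maximalSolution α t ^ α = ((1 - α) * t) ^ (1 / (1 - α) - 1) := by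
  have h_pos : 0 < 1 - α := sub_pos.2 hα
  have h_exponent : 1 / (1 - α) * α = 1 / (1 - α) - 1 := by
    field_simp
    ring
  rw [maximalSolution, ← Real.rpow_mul (mul_nonneg h_pos.le ht), h_exponent]

lemma hasDerivAt_maximalSolution (hα : α ∈ Ico 0 1) (ht : 0 ≤ t) :
    HasDerivAt (maximalSolution α) (maximalSolution α t ^ α) t := by
  have h_pos : 0 < 1 - α := sub_pos.2 hα.2
  have h_one_le : 1 ≤ 1 / (1 - α) := one_le_one_div h_pos (sub_le_self 1 hα.1)
  have h_deriv := ((hasDerivAt_id t).const_mul (1 - α)).rpow_const (Or.inr h_one_le)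
  rwa [mul_one, mul_one_div_cancel h_pos.ne', one_mul, id, ← maximalSolution_rpow hα.2 ht]
    at h_deriv

lemma integral_maximalSolution_rpow (hα : α ∈ Ico 0 1) (ht : 0 ≤ t) :
    ∫ s in (0 : ℝ)..t, maximalSolution α s ^ α = maximalSolution α t := by
  have h_deriv : ∀ s ∈ uIcc 0 t, HasDerivAt (maximalSolution α) (maximalSolution α s ^ α) s := by
    intro s hs
    rw [uIcc_of_le ht] at hs
    exact hasDerivAt_maximalSolution hα hs.1
  have h_cont : Continuous fun s ↦ maximalSolution α s ^ α :=
    (continuous_maximalSolution hα.2.le).rpow_const fun _ ↦ Or.inr hα.1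
  rw [integral_eq_sub_of_hasDerivAt h_deriv (h_cont.intervalIntegrable 0 t),
    maximalSolution_zero hα.2.ne, sub_zero]

end MaximalSolution

lemma rpow_mul_maximalSolution_le_integral {α k t : ℝ} {X : ℝ → ℝ} (hα : α ∈ Ioo 0 1)
    (hk : 0 ≤ k) (ht : 0 ≤ t)
    (hX : IntervalIntegrable (fun s ↦ Real.sign (X s) * |X s| ^ α) MeasureTheory.volume 0 t)
    (hXlb : ∀ s ∈ Icc 0 t, k * maximalSolution α s ≤ X s) :
    k ^ α * maximalSolution α t ≤ ∫ s in (0 : ℝ)..t, Real.sign (X s) * |X s| ^ α := by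
  have h_cont : Continuous fun s ↦ k ^ α * maximalSolution α s ^ α :=
    ((continuous_maximalSolution hα.2.le).rpow_const fun _ ↦ Or.inr hα.1.le).const_mul _
  have h_drift : ∀ s ∈ Icc 0 t,
      k ^ α * maximalSolution α s ^ α ≤ Real.sign (X s) * |X s| ^ α := by
    intro s hs
    have h_sol : 0 ≤ maximalSolution α s := maximalSolution_nonneg hα.2.le hs.1
    have h_lb : 0 ≤ k * maximalSolution α s := mul_nonneg hk h_sol
    rw [← Real.mul_rpow hk h_sol,
      sign_mul_abs_rpow_of_nonneg hα.1.ne' (h_lb.trans (hXlb s hs))]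
    exact Real.rpow_le_rpow h_lb (hXlb s hs) hα.1.le
  calc k ^ α * maximalSolution α t
      = ∫ s in (0 : ℝ)..t, k ^ α * maximalSolution α s ^ α := by
        rw [integral_const_mul, integral_maximalSolution_rpow (Ioo_subset_Ico_self hα) ht]
    _ ≤ ∫ s in (0 : ℝ)..t, Real.sign (X s) * |X s| ^ α :=
        integral_mono_on ht (h_cont.intervalIntegrable 0 t) hX h_drift

theorem deterministic_lower_bound_general {α β x S : ℝ} {w X : ℝ → ℝ}
    (hα : α ∈ Ioo 0 1) (hβ : β ≤ 1)
    (hX : IntervalIntegrable (fun s ↦ Real.sign (X s) * |X s| ^ α) MeasureTheory.volume 0 S)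
    (hXeq : ∀ t ∈ Icc 0 S,
      X t = x + (∫ s in (0 : ℝ)..t, Real.sign (X s) * |X s| ^ α) + w t)
    (hXlb : ∀ t ∈ Icc 0 S,
      (1 - β) * (1 - α) ^ (1 / (1 - α)) * t ^ (1 / (1 - α)) ≤ X t) :
    ∀ t ∈ Icc 0 S,
      x + (1 - β) ^ α * (1 - α) ^ (1 / (1 - α)) * t ^ (1 / (1 - α)) + w t ≤ X t := by
  intro t ht
  have h_integrable := hX.mono_set (uIcc_subset_uIcc_left (Icc_subset_uIcc ht))
  have h_lb : ∀ s ∈ Icc 0 t, (1 - β) * maximalSolution α s ≤ X s := by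
    intro s hs
    rw [maximalSolution_eq hα.2.le hs.1, ← mul_assoc]
    exact hXlb s (Icc_subset_Icc_right ht.2 hs)
  rw [hXeq t ht, mul_assoc _ _ (t ^ _), ← maximalSolution_eq hα.2.le ht.1]
  gcongr
  exact rpow_mul_maximalSolution_le_integral hα (sub_nonneg.2 hβ) ht.1 h_integrable h_lb

theorem deterministic_lower_bound
    (α β : ℝ) (hα : α ∈ Ioo (0:ℝ) 1) (hβ : β ∈ Ioo (0:ℝ) 1)
    (x S : ℝ) (hx : 0 < x) (hS : 0 < S)
    (w : ℝ → ℝ) (hw : ContinuousOn w (Icc 0 S)) (hw0 : w 0 = 0)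
    (X : ℝ → ℝ) (hX : ContinuousOn X (Icc 0 S))
    (hXeq : ∀ t ∈ Icc (0:ℝ) S,
      X t = x + (∫ s in (0:ℝ)..t, Real.sign (X s) * |X s| ^ α) + w t)
    (hXlb : ∀ t ∈ Icc (0:ℝ) S,
      (1 - β) * (1 - α) ^ ((1:ℝ) / (1 - α)) * t ^ ((1:ℝ) / (1 - α)) ≤ X t) :
    ∀ t ∈ Icc (0:ℝ) S,
      (1 - β) ^ α * (1 - α) ^ ((1:ℝ) / (1 - α)) * t ^ ((1:ℝ) / (1 - α)) + w t ≤ X t := by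
  intro t ht
  have h_integrable := ((continuous_sign_mul_abs_rpow hα.1).comp_continuousOn
    hX).intervalIntegrable_of_Icc (μ := MeasureTheory.volume) hS.le
  linarith [deterministic_lower_bound_general hα hβ.2.le h_integrable hXeq hXlb t ht]

end Stmt15
end
end

section
/- Let α ∈ (0,1), β ∈ (0,1), c_α := (1−α)^{1/(1−α)}, and define η by 1−η = ((1−β)^α + (1−β))/2 (so that 0 < η < β) and c̃_α := (β−η) c_α > 0. Let x > 0, ρ > 0, let w : [0,∞) → ℝ be continuous with w(0) = 0, and let X : [0,∞) → ℝ be continuous with X_t = x + ∫_0^t sign(X_s)|X_s|^α ds + w_t for all t ≥ 0. If c̃_α t^{1/(1−α)} + w_t > 0 for all t ∈ (0, ρ], then τ(X) ≥ ρ. -/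
/-!
Statement 16: if the deterministic curve `c̃_α t^{1/(1−α)} + w_t` stays positive on `(0, ρ]`,
then the solution `X` of the perturbed Peano equation started from `x > 0` satisfies
`τ(X) ≥ ρ`, where `τ(X) = inf{t > 0 : X_t ≤ (1−β) c_α t^{1/(1−α)}}`.
-/

open Set intervalIntegral

noncomputable section

namespace Stmt16

/-!
The drift `y ↦ sign y * |y| ^ α` is nondecreasing, so a strict subsolution of the integral equation
stays below every supersolution, even though solutions of the equation need not be unique. The Peano
curve `P t = c_α t ^ (1 / (1 - α))` satisfies `P' = P ^ α`, so the drift accumulated along `κ P` is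
`κ ^ α P`. Hence `κ P` is a strict subsolution as soon as the forcing, initial value included,
stays above `-(κ ^ α - κ) P`. For `κ = 1 - β` we have `κ ^ α - κ = 2 (β - η)`, twice the
coefficient allowed for in the hypothesis on `w`.
-/

section Comparison

open MeasureTheory

lemma exists_first_le {ι E : Type*} [ConditionallyCompleteLinearOrder ι] [TopologicalSpace ι]
    [OrderTopology ι] [LinearOrder E] [TopologicalSpace E] [OrderClosedTopology E]
    {a b : ι} {u v : ι → E} (hab : a ≤ b) (hu : ContinuousOn u (Icc a b))
    (hv : ContinuousOn v (Icc a b)) (ha : v a < u a) (hb : u b ≤ v b) :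
    ∃ T ∈ Ioc a b, u T ≤ v T ∧ ∀ s ∈ Ico a T, v s < u s := by
  have hcompact : IsCompact {s ∈ Icc a b | u s ≤ v s} :=
    isCompact_Icc.of_isClosed_subset (isClosed_Icc.isClosed_le hu hv) (sep_subset _ _)
  obtain ⟨T, ⟨hT, hle⟩, hleast⟩ := hcompact.exists_isLeast ⟨b, right_mem_Icc.2 hab, hb⟩
  have haT : a ≠ T := by
    rintro rfl
    exact ha.not_ge hle
  refine ⟨T, ⟨hT.1.lt_of_ne haT, hT.2⟩, hle, fun s hs ↦ ?_⟩
  by_contra! hus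
  exact hs.2.not_ge (hleast ⟨⟨hs.1, hs.2.le.trans hT.2⟩, hus⟩)

variable {f u v g : ℝ → ℝ} {a b : ℝ}

lemma intervalIntegrable_comp_of_monotone (hf : Monotone f) (hu : ContinuousOn u (uIcc a b)) :
    IntervalIntegrable (fun s ↦ f (u s)) volume a b := by
  have hmeas : AEMeasurable (fun s ↦ f (u s)) (volume.restrict (uIcc a b)) :=
    hf.measurable.comp_aemeasurable (hu.aemeasurable measurableSet_uIcc)
  obtain ⟨m, hm⟩ := (isCompact_uIcc.image_of_continuousOn hu).bddBelow
  obtain ⟨M, hM⟩ := (isCompact_uIcc.image_of_continuousOn hu).bddAbove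
  have : Fact (volume (uIcc a b) < ⊤) := ⟨isCompact_uIcc.measure_lt_top⟩
  suffices IntegrableOn (fun s ↦ f (u s)) (uIcc a b) from this.intervalIntegrable
  refine Integrable.of_mem_Icc (f m) (f M) hmeas ?_
  filter_upwards [ae_restrict_mem measurableSet_uIcc] with s hs
  exact ⟨hf (hm (mem_image_of_mem u hs)), hf (hM (mem_image_of_mem u hs))⟩

theorem lt_of_subsolution_of_supersolution (hf : Monotone f)
    (hu : ContinuousOn u (Icc a b)) (hv : ContinuousOn v (Icc a b))
    (hsub : ∀ t ∈ Icc a b, v t < g t + ∫ s in a..t, f (v s))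
    (hsuper : ∀ t ∈ Icc a b, g t + ∫ s in a..t, f (u s) ≤ u t) :
    ∀ t ∈ Icc a b, v t < u t := by
  intro t ht
  by_contra! hut
  have ha : a ∈ Icc a b := left_mem_Icc.2 (ht.1.trans ht.2)
  have hva : v a < u a := by
    calc v a < g a + ∫ s in a..a, f (v s) := hsub a ha
      _ = g a + ∫ s in a..a, f (u s) := by rw [integral_same, integral_same]
      _ ≤ u a := hsuper a ha
  have hsubset : Icc a t ⊆ Icc a b := Icc_subset_Icc_right ht.2
  obtain ⟨T, hT, huT, hvu⟩ := exists_first_le ht.1 (hu.mono hsubset) (hv.mono hsubset) hva hut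
  have hTb : T ∈ Icc a b := hsubset (Ioc_subset_Icc_self hT)
  have hintegrable {y : ℝ → ℝ} (hy : ContinuousOn y (Icc a b)) :
      IntervalIntegrable (fun s ↦ f (y s)) volume a T :=
    intervalIntegrable_comp_of_monotone hf <|
      hy.mono (uIcc_of_le hTb.1 ▸ Icc_subset_Icc_right hTb.2)
  refine huT.not_gt ?_
  calc v T < g T + ∫ s in a..T, f (v s) := hsub T hTb
    _ ≤ g T + ∫ s in a..T, f (u s) := by
        gcongr
        exact integral_mono_on_of_le_Ioo hTb.1 (hintegrable hv) (hintegrable hu)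
          fun s hs ↦ hf (hvu s (Ioo_subset_Ico_self hs)).le
    _ ≤ u T := hsuper T hTb

end Comparison

/-- The odd extension `sign y * |y| ^ α` of the power function, the drift of the Peano equation. -/
def signedPow (α y : ℝ) : ℝ := Real.sign y * |y| ^ α

/-- The maximal solution `c_α t ^ (1 / (1 - α))` of `y' = signedPow α y`, `y 0 = 0`, for
`α ∈ (0, 1)` and `t ≥ 0`; the constant `c_α` is written out as `(1 - α) ^ (1 / (1 - α))`. -/
def peanoCurve (α t : ℝ) : ℝ := (1 - α) ^ (1 / (1 - α)) * t ^ (1 / (1 - α))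

variable {α : ℝ}

lemma signedPow_of_nonneg (hα : α ≠ 0) {y : ℝ} (hy : 0 ≤ y) : signedPow α y = y ^ α := by
  rcases hy.eq_or_lt with rfl | hy
  · simp only [signedPow, Real.sign_zero, zero_mul, Real.zero_rpow hα]
  · rw [signedPow, Real.sign_of_pos hy, one_mul, abs_of_pos hy]

lemma signedPow_neg (α y : ℝ) : signedPow α (-y) = -signedPow α y := by
  rw [signedPow, signedPow, Real.sign_neg, abs_neg, neg_mul]

lemma monotone_signedPow (hα : 0 < α) : Monotone (signedPow α) := by
  refine monotone_of_odd_of_monotoneOn_nonneg (signedPow_neg α) fun y hy z hz hyz ↦ ?_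
  rw [signedPow_of_nonneg hα.ne' hy, signedPow_of_nonneg hα.ne' hz]
  exact Real.rpow_le_rpow hy hyz hα.le

lemma peanoCurve_zero (hα : α < 1) : peanoCurve α 0 = 0 := by
  rw [peanoCurve, Real.zero_rpow (one_div_pos.2 (sub_pos.2 hα)).ne', mul_zero]

lemma peanoCurve_nonneg (hα : α < 1) {t : ℝ} (ht : 0 ≤ t) : 0 ≤ peanoCurve α t :=
  mul_nonneg (Real.rpow_nonneg (sub_pos.2 hα).le _) (Real.rpow_nonneg ht _)

lemma continuous_peanoCurve (hα : α < 1) : Continuous (peanoCurve α) :=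
  continuous_const.mul (Real.continuous_rpow_const (one_div_pos.2 (sub_pos.2 hα)).le)

lemma peanoCurve_rpow (hα : α < 1) {t : ℝ} (ht : 0 ≤ t) :
    peanoCurve α t ^ α = (1 - α) ^ (1 / (1 - α) - 1) * t ^ (1 / (1 - α) - 1) := by
  have hα' : 0 < 1 - α := sub_pos.2 hα
  have hexp : 1 / (1 - α) * α = 1 / (1 - α) - 1 := by
    field_simp
    ring
  rw [peanoCurve, Real.mul_rpow (Real.rpow_nonneg hα'.le _) (Real.rpow_nonneg ht _),
    ← Real.rpow_mul hα'.le, ← Real.rpow_mul ht, hexp]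

lemma integral_peanoCurve_rpow (hα : α < 1) {t : ℝ} (ht : 0 ≤ t) :
    ∫ s in (0 : ℝ)..t, peanoCurve α s ^ α = peanoCurve α t := by
  have hα' : 0 < 1 - α := sub_pos.2 hα
  have hp : 0 < 1 / (1 - α) := one_div_pos.2 hα'
  calc ∫ s in (0 : ℝ)..t, peanoCurve α s ^ α
      = ∫ s in (0 : ℝ)..t, (1 - α) ^ (1 / (1 - α) - 1) * s ^ (1 / (1 - α) - 1) :=
        integral_congr fun s hs ↦ peanoCurve_rpow hα (uIcc_of_le ht ▸ hs).1
    _ = (1 - α) ^ (1 / (1 - α) - 1) * (t ^ (1 / (1 - α)) / (1 / (1 - α))) := by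
        rw [integral_const_mul, integral_rpow (Or.inl (by linarith)), sub_add_cancel,
          Real.zero_rpow hp.ne', sub_zero]
    _ = peanoCurve α t := by
        rw [Real.rpow_sub_one hα'.ne', peanoCurve]
        field_simp

lemma integral_signedPow_mul_peanoCurve (hα : α ∈ Ioo 0 1) {κ t : ℝ} (hκ : 0 ≤ κ) (ht : 0 ≤ t) :
    ∫ s in (0 : ℝ)..t, signedPow α (κ * peanoCurve α s) = κ ^ α * peanoCurve α t := by
  have hdrift : EqOn (fun s ↦ signedPow α (κ * peanoCurve α s))
      (fun s ↦ κ ^ α * peanoCurve α s ^ α) (uIcc 0 t) := fun s hs ↦ by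
    have hP : 0 ≤ peanoCurve α s := peanoCurve_nonneg hα.2 (uIcc_of_le ht ▸ hs).1
    simp only [signedPow_of_nonneg hα.1.ne' (mul_nonneg hκ hP), Real.mul_rpow hκ hP]
  rw [integral_congr hdrift, integral_const_mul, integral_peanoCurve_rpow hα.2 ht]

theorem tau_lower_bound_general (hα : α ∈ Ioo 0 1) {κ ρ : ℝ} (hκ : 0 ≤ κ) {g X : ℝ → ℝ}
    (hX : ContinuousOn X (Icc 0 ρ))
    (hsuper : ∀ t ∈ Icc 0 ρ, g t + ∫ s in (0 : ℝ)..t, signedPow α (X s) ≤ X t)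
    (hg : ∀ t ∈ Icc 0 ρ, 0 < (κ ^ α - κ) * peanoCurve α t + g t) :
    ∀ t ∈ Icc 0 ρ, κ * peanoCurve α t < X t := by
  refine lt_of_subsolution_of_supersolution (monotone_signedPow hα.1) hX
    (continuous_const.mul (continuous_peanoCurve hα.2)).continuousOn (fun t ht ↦ ?_) hsuper
  rw [integral_signedPow_mul_peanoCurve hα hκ ht.1]
  linarith [hg t ht]

theorem tau_lower_bound
    (α β : ℝ) (hα : α ∈ Ioo (0:ℝ) 1) (hβ : β ∈ Ioo (0:ℝ) 1)
    (η ctil : ℝ)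
    (hη : 1 - η = ((1 - β) ^ α + (1 - β)) / 2)
    (hctil : ctil = (β - η) * (1 - α) ^ ((1:ℝ) / (1 - α)))
    (x ρ : ℝ) (hx : 0 < x) (hρ : 0 < ρ)
    (w : ℝ → ℝ) (hw : Continuous w) (hw0 : w 0 = 0)
    (X : ℝ → ℝ) (hX : Continuous X)
    (hXeq : ∀ t : ℝ, 0 ≤ t →
      X t = x + (∫ s in (0:ℝ)..t, Real.sign (X s) * |X s| ^ α) + w t)
    (hpos : ∀ t ∈ Ioc (0:ℝ) ρ, 0 < ctil * t ^ ((1:ℝ) / (1 - α)) + w t) :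
    -- τ(X) ≥ ρ : any time t > 0 at which X goes below the curve satisfies t ≥ ρ
    ∀ t : ℝ, 0 < t →
      X t ≤ (1 - β) * (1 - α) ^ ((1:ℝ) / (1 - α)) * t ^ ((1:ℝ) / (1 - α)) → ρ ≤ t := by
  have hgap : (1 - β) ^ α - (1 - β) = 2 * (β - η) := by linarith
  have hηβ : 0 ≤ β - η := by
    linarith [Real.self_le_rpow_of_le_one (sub_nonneg.2 hβ.2.le) (by linarith [hβ.1]) hα.2.le]
  have hforcing : ∀ t ∈ Icc 0 ρ,
      0 < ((1 - β) ^ α - (1 - β)) * peanoCurve α t + (x + w t) := by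
    intro t ht
    rcases ht.1.eq_or_lt with rfl | ht0
    · rwa [peanoCurve_zero hα.2, hw0, mul_zero, zero_add, add_zero]
    · have hwt := hpos t ⟨ht0, ht.2⟩
      rw [hctil, mul_assoc, ← peanoCurve] at hwt
      rw [hgap]
      linarith [mul_nonneg hηβ (peanoCurve_nonneg hα.2 ht.1)]
  intro t ht hXt
  by_contra! htρ
  rw [mul_assoc] at hXt
  exact hXt.not_gt <| tau_lower_bound_general hα (sub_nonneg.2 hβ.2.le) hX.continuousOn
    (fun s hs ↦ ((hXeq s hs.1).trans (add_right_comm ..)).ge) hforcing t ⟨ht.le, htρ.le⟩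

end Stmt16
end
end
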